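/- There exists a universal constant C₀ > 0 such that for every α > 0 and every measurable g : ℝ² → ℂ, ∫_{ℝ²} |g(ξ,η)| dξ dη ≤ C₀·((1+α)^{1/2}/α)·( ( ∫_{ℝ²} (1+|η|)⁴·|g(ξ,η)|² dξ dη )^{1/2} + ( ∫_{ℝ²} (1+|ξ|)^{4/3+α}·|g(ξ,η)|² dξ dη )^{1/2} ). -/

import Mathlib

open MeasureTheory
open scoped ENNReal NNReal

/-!
Cauchy–Schwarz against the weight `(1 + |ξ|) ^ (a * s) * (1 + |η|) ^ (b * t)` with `s + t = 1`,
followed by Hölder with exponents `1 / s` and `1 / t`, bounds `∫ u` by the two weighted `L²` norms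
as soon as the reciprocal weight is integrable, that is, when `a * s > 1` and `b * t > 1`. Such
`s`, `t` exist exactly when `δ = 1 - a⁻¹ - b⁻¹` is positive. Splitting this slack evenly,
`s = a⁻¹ + δ / 2` and `t = b⁻¹ + δ / 2`, makes the integral of the reciprocal weight
`4 / (a * δ) * (4 / (b * δ))`.

For `a = 4 / 3 + α` and `b = 4` one has `δ = 3 * α / (4 * a)`, whence the blow-up as `α → 0`.
-/

lemma ennreal_rpow_mul_rpow_le_add (x y : ℝ≥0∞) {s t : ℝ} (hs : 0 ≤ s) (ht : 0 ≤ t)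
    (hst : s + t = 1) : x ^ s * y ^ t ≤ x + y :=
  calc x ^ s * y ^ t ≤ (x + y) ^ s * (x + y) ^ t := by gcongr <;> simp
    _ = x + y := by rw [← ENNReal.rpow_add_of_nonneg s t hs ht, hst, ENNReal.rpow_one]

section Weights

variable {X Y : Type*} [MeasurableSpace X] [MeasurableSpace Y] {μ : Measure X} {ν : Measure Y}

lemma lintegral_le_lintegral_inv_mul_lintegral_mul_sq {w u : X → ℝ≥0∞} (hw : AEMeasurable w μ)
    (hu : AEMeasurable u μ) (hw_zero : ∀ᵐ x ∂μ, w x ≠ 0) (hw_top : ∀ᵐ x ∂μ, w x ≠ ∞) :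
    ∫⁻ x, u x ∂μ ≤
      (∫⁻ x, (w x)⁻¹ ∂μ) ^ (1 / 2 : ℝ) * (∫⁻ x, w x * u x ^ 2 ∂μ) ^ (1 / 2 : ℝ) := by
  have hsplit : ∀ᵐ x ∂μ, u x = (w x)⁻¹ ^ (1 / 2 : ℝ) * (w x * u x ^ 2) ^ (1 / 2 : ℝ) := by
    filter_upwards [hw_zero, hw_top] with x hx_zero hx_top
    rw [← ENNReal.mul_rpow_of_nonneg _ _ (by norm_num), ← mul_assoc,
      ENNReal.inv_mul_cancel hx_zero hx_top, one_mul, ← ENNReal.rpow_natCast_mul]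
    norm_num
  rw [lintegral_congr_ae hsplit]
  exact ENNReal.lintegral_mul_norm_pow_le hw.inv (hw.mul (hu.pow_const 2))
    (by norm_num) (by norm_num) (by norm_num)

lemma lintegral_rpow_mul_rpow_mul_le {A B v : X → ℝ≥0∞} (hA : AEMeasurable A μ)
    (hB : AEMeasurable B μ) (hv : AEMeasurable v μ) {s t : ℝ} (hs : 0 ≤ s) (ht : 0 ≤ t)
    (hst : s + t = 1) :
    ∫⁻ x, A x ^ s * B x ^ t * v x ∂μ ≤
      (∫⁻ x, A x * v x ∂μ) ^ s * (∫⁻ x, B x * v x ∂μ) ^ t := by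
  have hsplit (x : X) : A x ^ s * B x ^ t * v x = (A x * v x) ^ s * (B x * v x) ^ t := by
    rw [ENNReal.mul_rpow_of_nonneg _ _ hs, ENNReal.mul_rpow_of_nonneg _ _ ht,
      mul_mul_mul_comm, ← ENNReal.rpow_add_of_nonneg s t hs ht, hst, ENNReal.rpow_one]
  simp_rw [hsplit]
  exact ENNReal.lintegral_mul_norm_pow_le (hA.mul hv) (hB.mul hv) hs ht hst

lemma lintegral_le_lintegral_inv_rpow_mul_rpow_mul_add {A B u : X → ℝ≥0∞}
    (hA : AEMeasurable A μ) (hB : AEMeasurable B μ) (hu : AEMeasurable u μ)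
    (hAB_zero : ∀ᵐ x ∂μ, A x ≠ 0 ∧ B x ≠ 0) (hAB_top : ∀ᵐ x ∂μ, A x ≠ ∞ ∧ B x ≠ ∞)
    {s t : ℝ} (hs : 0 ≤ s) (ht : 0 ≤ t) (hst : s + t = 1) :
    ∫⁻ x, u x ∂μ ≤ (∫⁻ x, (A x ^ s * B x ^ t)⁻¹ ∂μ) ^ (1 / 2 : ℝ) *
      ((∫⁻ x, A x * u x ^ 2 ∂μ) ^ (1 / 2 : ℝ) + (∫⁻ x, B x * u x ^ 2 ∂μ) ^ (1 / 2 : ℝ)) := by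
  have hw_zero : ∀ᵐ x ∂μ, A x ^ s * B x ^ t ≠ 0 := by
    filter_upwards [hAB_zero, hAB_top] with x hx_zero hx_top
    simp [ENNReal.rpow_eq_zero_iff, hx_zero, hx_top]
  have hw_top : ∀ᵐ x ∂μ, A x ^ s * B x ^ t ≠ ∞ := by
    filter_upwards [hAB_top] with x hx_top
    exact ENNReal.mul_ne_top (ENNReal.rpow_ne_top_of_nonneg hs hx_top.1)
      (ENNReal.rpow_ne_top_of_nonneg ht hx_top.2)
  have hinterp : ∫⁻ x, A x ^ s * B x ^ t * u x ^ 2 ∂μ ≤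
      ∫⁻ x, A x * u x ^ 2 ∂μ + ∫⁻ x, B x * u x ^ 2 ∂μ :=
    (lintegral_rpow_mul_rpow_mul_le hA hB (hu.pow_const 2) hs ht hst).trans
      (ennreal_rpow_mul_rpow_le_add _ _ hs ht hst)
  refine (lintegral_le_lintegral_inv_mul_lintegral_mul_sq (by fun_prop) hu hw_zero hw_top).trans ?_
  gcongr
  exact (ENNReal.rpow_le_rpow hinterp (by norm_num)).trans
    (ENNReal.rpow_add_le_add_rpow _ _ (by norm_num) (by norm_num))

lemma lintegral_prod_inv_mul [SFinite ν] {f : X → ℝ≥0∞} {g : Y → ℝ≥0∞}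
    (hf : AEMeasurable f μ) (hg : AEMeasurable g ν) (hf_zero : ∀ x, f x ≠ 0)
    (hf_top : ∀ x, f x ≠ ∞) :
    ∫⁻ p, (f p.1 * g p.2)⁻¹ ∂μ.prod ν = (∫⁻ x, (f x)⁻¹ ∂μ) * ∫⁻ y, (g y)⁻¹ ∂ν := by
  simp_rw [ENNReal.mul_inv (.inl (hf_zero _)) (.inl (hf_top _))]
  exact lintegral_prod_mul hf.inv hg.inv

end Weights

lemma lintegral_one_add_abs_rpow_neg {r : ℝ} (hr : 1 < r) :
    ∫⁻ x : ℝ, ENNReal.ofReal ((1 + |x|) ^ (-r)) = ENNReal.ofReal (2 / (r - 1)) := by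
  have hint : Integrable fun x : ℝ => (1 + |x|) ^ (-r) :=
    integrable_one_add_norm (by simpa using hr)
  have hshift : ∫ x in Set.Ioi (0 : ℝ), (1 + x) ^ (-r) = ∫ x in Set.Ioi (1 : ℝ), x ^ (-r) := by
    simpa using (measurePreserving_add_left (volume : Measure ℝ) 1).setIntegral_preimage_emb
      (measurableEmbedding_addLeft 1) (fun x : ℝ => x ^ (-r)) (Set.Ioi 1)
  rw [← ofReal_integral_eq_lintegral_ofReal hint (.of_forall fun x => by positivity),
    integral_comp_abs (f := fun x : ℝ => (1 + x) ^ (-r)), hshift,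
    integral_Ioi_rpow_of_lt (by linarith) one_pos, Real.one_rpow,
    show -r + 1 = -(r - 1) by ring, neg_div_neg_eq, mul_one_div]

lemma lintegral_inv_ofReal_one_add_abs_rpow_rpow {a s : ℝ} (has : 1 < a * s) :
    ∫⁻ x : ℝ, (ENNReal.ofReal ((1 + |x|) ^ a) ^ s)⁻¹ = ENNReal.ofReal (2 / (a * s - 1)) := by
  rw [← lintegral_one_add_abs_rpow_neg has]
  refine lintegral_congr fun x => ?_
  rw [← ENNReal.rpow_neg, ENNReal.ofReal_rpow_of_pos (by positivity),
    ← Real.rpow_mul (by positivity), mul_neg]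

lemma lintegral_inv_anisotropic_weight {a b s t : ℝ} (has : 1 < a * s) (hbt : 1 < b * t) :
    ∫⁻ p : ℝ × ℝ, (ENNReal.ofReal ((1 + |p.1|) ^ a) ^ s * ENNReal.ofReal ((1 + |p.2|) ^ b) ^ t)⁻¹ =
      ENNReal.ofReal (2 / (a * s - 1) * (2 / (b * t - 1))) := by
  have hpos (x : ℝ) : 0 < ENNReal.ofReal ((1 + |x|) ^ a) := ENNReal.ofReal_pos.2 (by positivity)
  rw [ENNReal.ofReal_mul (div_nonneg zero_le_two (sub_pos.2 has).le),
    ← lintegral_inv_ofReal_one_add_abs_rpow_rpow has,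
    ← lintegral_inv_ofReal_one_add_abs_rpow_rpow hbt]
  exact lintegral_prod_inv_mul (f := fun x : ℝ => ENNReal.ofReal ((1 + |x|) ^ a) ^ s)
    (g := fun y : ℝ => ENNReal.ofReal ((1 + |y|) ^ b) ^ t) (by fun_prop) (by fun_prop)
    (fun x => (ENNReal.rpow_pos (hpos x) ENNReal.ofReal_ne_top).ne')
    (fun x => ENNReal.rpow_ne_top_of_ne_zero (hpos x).ne' ENNReal.ofReal_ne_top)

theorem stmt_15_general {a b : ℝ} (ha : 0 < a) (hb : 0 < b) (hab : a⁻¹ + b⁻¹ < 1)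
    {u : ℝ × ℝ → ℝ≥0∞} (hu : AEMeasurable u) :
    ∫⁻ p, u p ≤ ENNReal.ofReal (4 / (√(a * b) * (1 - a⁻¹ - b⁻¹))) *
      ((∫⁻ p : ℝ × ℝ, ENNReal.ofReal ((1 + |p.1|) ^ a) * u p ^ 2) ^ (1 / 2 : ℝ) +
        (∫⁻ p : ℝ × ℝ, ENNReal.ofReal ((1 + |p.2|) ^ b) * u p ^ 2) ^ (1 / 2 : ℝ)) := by
  obtain ⟨δ, hδ⟩ : ∃ δ, δ = 1 - a⁻¹ - b⁻¹ := ⟨_, rfl⟩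
  have hδ_pos : 0 < δ := by linarith
  have has : a * (a⁻¹ + δ / 2) - 1 = a * δ / 2 := by field_simp; ring
  have hbt : b * (b⁻¹ + δ / 2) - 1 = b * δ / 2 := by field_simp; ring
  have hweight_ne_zero (c x : ℝ) : ENNReal.ofReal ((1 + |x|) ^ c) ≠ 0 :=
    (ENNReal.ofReal_pos.2 (by positivity)).ne'
  have hconst : √(2 / (a * δ / 2) * (2 / (b * δ / 2))) = 4 / (√(a * b) * δ) := by
    rw [show 2 / (a * δ / 2) * (2 / (b * δ / 2)) = (4 / δ) ^ 2 / (a * b) by field_simp; norm_num,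
      Real.sqrt_div (by positivity), Real.sqrt_sq (by positivity), div_div, mul_comm δ]
  have hbound := lintegral_le_lintegral_inv_rpow_mul_rpow_mul_add (s := a⁻¹ + δ / 2)
    (t := b⁻¹ + δ / 2) (A := fun p : ℝ × ℝ => ENNReal.ofReal ((1 + |p.1|) ^ a))
    (B := fun p : ℝ × ℝ => ENNReal.ofReal ((1 + |p.2|) ^ b)) (by fun_prop) (by fun_prop) hu
    (.of_forall fun p => ⟨hweight_ne_zero a p.1, hweight_ne_zero b p.2⟩)
    (.of_forall fun _ => ⟨ENNReal.ofReal_ne_top, ENNReal.ofReal_ne_top⟩)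
    (by positivity) (by positivity) (by linarith)
  rwa [lintegral_inv_anisotropic_weight (sub_pos.1 (has ▸ by positivity))
      (sub_pos.1 (hbt ▸ by positivity)), has, hbt,
    ENNReal.ofReal_rpow_of_nonneg (by positivity) (by norm_num), ← Real.sqrt_eq_rpow, hconst, hδ]
    at hbound

lemma four_div_sqrt_mul_one_sub_inv_le {α : ℝ} (hα : 0 < α) :
    4 / (√((4 / 3 + α) * 4) * (1 - (4 / 3 + α)⁻¹ - 4⁻¹)) ≤ 4 * ((1 + α) ^ (1 / 2 : ℝ) / α) := by
  obtain ⟨a, ha⟩ : ∃ a, a = 4 / 3 + α := ⟨_, rfl⟩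
  have ha_pos : 0 < a := by linarith
  have hδ : 1 - a⁻¹ - 4⁻¹ = 3 * α / (4 * a) := by
    field_simp
    linarith
  have hsqrt : √(a * 4) = 2 * √a := by
    rw [Real.sqrt_eq_iff_mul_self_eq (by positivity) (by positivity), mul_mul_mul_comm,
      Real.mul_self_sqrt ha_pos.le]
    ring
  rw [← ha]
  calc 4 / (√(a * 4) * (1 - a⁻¹ - 4⁻¹)) = 8 / 3 * √a / α := by
        rw [hδ, hsqrt]
        field_simp
        rw [Real.sq_sqrt ha_pos.le]
        ring
    _ ≤ 4 * √(1 + α) / α := by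
        gcongr ?_ / α
        refine le_of_sq_le_sq ?_ (by positivity)
        rw [mul_pow, mul_pow, Real.sq_sqrt ha_pos.le, Real.sq_sqrt (by positivity)]
        linarith
    _ = 4 * ((1 + α) ^ (1 / 2 : ℝ) / α) := by rw [Real.sqrt_eq_rpow, mul_div_assoc]

/-- Anisotropic two-dimensional L¹–L² bound on the Fourier side:
`∫∫|g| ≤ C₀ ((1+α)^{1/2}/α) ((∫∫ (1+|η|)⁴|g|²)^{1/2} + (∫∫ (1+|ξ|)^{4/3+α}|g|²)^{1/2})`,
where the first variable of `g` is `ξ` and the second is `η`. -/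
theorem stmt_15 :
    ∃ C₀ : ℝ, 0 < C₀ ∧ ∀ α : ℝ, 0 < α → ∀ g : ℝ × ℝ → ℂ, Measurable g →
      (∫⁻ p : ℝ × ℝ, (‖g p‖₊ : ℝ≥0∞)) ≤
        ENNReal.ofReal (C₀ * ((1 + α) ^ ((1 : ℝ) / 2) / α))
          * ((∫⁻ p : ℝ × ℝ, ENNReal.ofReal ((1 + |p.2|) ^ 4) * (‖g p‖₊ : ℝ≥0∞) ^ 2)
                ^ ((1 : ℝ) / 2)
              + (∫⁻ p : ℝ × ℝ,
                    ENNReal.ofReal ((1 + |p.1|) ^ ((4 : ℝ) / 3 + α)) * (‖g p‖₊ : ℝ≥0∞) ^ 2)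
                ^ ((1 : ℝ) / 2)) := by
  refine ⟨4, four_pos, fun α hα g hg => ?_⟩
  have hexp : (4 / 3 + α)⁻¹ + 4⁻¹ < 1 := by field_simp; linarith
  have hbound := stmt_15_general (by positivity) four_pos hexp hg.enorm.aemeasurable
  simp only [Real.rpow_ofNat] at hbound
  rw [add_comm (_ ^ (1 / 2 : ℝ)) (_ ^ (1 / 2 : ℝ))]
  exact hbound.trans (by gcongr ENNReal.ofReal ?_ * _; exact four_div_sqrt_mul_one_sub_inv_le hα)
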